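/- State-space collapse under MaxWeight (Proposition 4.2, fixed-ε version). Fix n ≥ 1 and ν ∈ F with ν_min := min_{ij} ν_{ij} > 0, and suppose the arrival means are λ_{ij} = (1−ε)ν_{ij} with variances σ_{ij}², where 0 < ε ≤ ν_min/(2‖ν‖). Let the schedule be chosen by the MaxWeight policy, and let π be an invariant distribution of the resulting Markov chain. Then for every integer r ≥ 1, E_π[‖q̄_⊥‖^r] ≤ (M_r)^r, where M_r = 2^{1/r} · max( 8(‖λ‖² + ‖σ‖² + n)/ν_min , (√r · e)^{1/r} · 16 · (r/e) · (n·a_max/ν_min) · (n·a_max + 1) ), ‖λ‖² = ∑_{ij} λ_{ij}², and ‖σ‖² = ∑_{ij} σ_{ij}². -/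

import Mathlib

open scoped BigOperators ENNReal

namespace SwitchModel

/-- Next queue state: `q⁺_{ij} = max(q_{ij} + a_{ij} − s_{ij}, 0)` (truncated `ℕ` subtraction). -/
def nextQ (n : ℕ) (q a s : Fin n → Fin n → ℕ) : Fin n → Fin n → ℕ :=
  fun i j => q i j + a i j - s i j

/-- A 0–1 matrix with at most one 1 per row and per column. -/
def IsSchedule (n : ℕ) (s : Fin n → Fin n → ℕ) : Prop :=
  (∀ i j, s i j ≤ 1) ∧ (∀ i, (∑ j, s i j) ≤ 1) ∧ (∀ j, (∑ i, s i j) ≤ 1)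

/-- A permutation matrix: exactly one 1 per row and per column. -/
def IsPerm (n : ℕ) (s : Fin n → Fin n → ℕ) : Prop :=
  (∀ i j, s i j ≤ 1) ∧ (∀ i, (∑ j, s i j) = 1) ∧ (∀ j, (∑ i, s i j) = 1)

/-- MaxWeight selection: `sched q` is a permutation matrix maximizing `∑ q_{ij} s_{ij}`. -/
def IsMaxWeight (n : ℕ) (sched : (Fin n → Fin n → ℕ) → (Fin n → Fin n → ℕ)) : Prop :=
  ∀ q, IsPerm n (sched q) ∧
    ∀ s, IsPerm n s → (∑ i, ∑ j, q i j * s i j) ≤ (∑ i, ∑ j, q i j * sched q i j)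

/-- Joint arrival probability: the entries are mutually independent with marginals `A i j`. -/
noncomputable def jointA (n : ℕ) (A : Fin n → Fin n → ℕ → ℝ≥0∞) (a : Fin n → Fin n → ℕ) : ℝ≥0∞ :=
  ∏ i, ∏ j, A i j (a i j)

/-- `A i j` is a probability distribution on `ℕ` supported on `[0, amax]`,
with mean `lam i j` and variance `(sig i j)^2`. -/
def ArrivalDist (n : ℕ) (A : Fin n → Fin n → ℕ → ℝ≥0∞)
    (lam sig : Fin n → Fin n → ℝ) (amax : ℕ) : Prop :=
  (∀ i j, (∑' k : ℕ, A i j k) = 1) ∧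
  (∀ i j k, A i j k ≠ 0 → k ≤ amax) ∧
  (∀ i j, (∑' k : ℕ, (A i j k).toReal * (k : ℝ)) = lam i j) ∧
  (∀ i j, (∑' k : ℕ, (A i j k).toReal * ((k : ℝ) - lam i j) ^ 2) = (sig i j) ^ 2)

/-- Transition kernel of the switch under a deterministic scheduling map `sched`. -/
noncomputable def kernelMW (n : ℕ) (A : Fin n → Fin n → ℕ → ℝ≥0∞)
    (sched : (Fin n → Fin n → ℕ) → (Fin n → Fin n → ℕ))
    (q q' : Fin n → Fin n → ℕ) : ℝ≥0∞ :=
  ∑' a : Fin n → Fin n → ℕ, jointA n A a * (if nextQ n q a (sched q) = q' then 1 else 0)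

/-- Transition kernel of the switch under a randomized scheduling policy `pol`
(the schedule is chosen independently of the current arrivals). -/
noncomputable def kernelPol (n : ℕ) (A : Fin n → Fin n → ℕ → ℝ≥0∞)
    (pol : (Fin n → Fin n → ℕ) → (Fin n → Fin n → ℕ) → ℝ≥0∞)
    (q q' : Fin n → Fin n → ℕ) : ℝ≥0∞ :=
  ∑' a : Fin n → Fin n → ℕ, ∑' s : Fin n → Fin n → ℕ,
    jointA n A a * pol q s * (if nextQ n q a s = q' then 1 else 0)

/-- `pd` is an invariant (stationary) probability distribution of the kernel `P`. -/
def IsInvariant (n : ℕ)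
    (P : (Fin n → Fin n → ℕ) → (Fin n → Fin n → ℕ) → ℝ≥0∞)
    (pd : (Fin n → Fin n → ℕ) → ℝ≥0∞) : Prop :=
  (∑' q : Fin n → Fin n → ℕ, pd q) = 1 ∧
  ∀ q', (∑' q : Fin n → Fin n → ℕ, pd q * P q q') = pd q'

/-- The face `F`: nonnegative matrices with all row and column sums equal to 1. -/
def memF (n : ℕ) (ν : Fin n → Fin n → ℝ) : Prop :=
  (∀ i j, 0 ≤ ν i j) ∧ (∀ i, (∑ j, ν i j) = 1) ∧ (∀ j, (∑ i, ν i j) = 1)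

/-- Steady-state expectation of the total queue length `∑_{ij} q_{ij}`. -/
noncomputable def Etot (n : ℕ) (pd : (Fin n → Fin n → ℕ) → ℝ≥0∞) : ℝ≥0∞ :=
  ∑' q : Fin n → Fin n → ℕ, pd q * (∑ i, ∑ j, (q i j : ℝ≥0∞))

/-- Steady-state expectation of `(∑_{ij} q_{ij})²`. -/
noncomputable def Etot2 (n : ℕ) (pd : (Fin n → Fin n → ℕ) → ℝ≥0∞) : ℝ≥0∞ :=
  ∑' q : Fin n → Fin n → ℕ, pd q * (∑ i, ∑ j, (q i j : ℝ≥0∞)) ^ 2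

/-- Euclidean norm on `ℝ^{n×n}`. -/
noncomputable def normE (n : ℕ) (x : Fin n → Fin n → ℝ) : ℝ :=
  Real.sqrt (∑ i, ∑ j, x i j ^ 2)

/-- The cone `K = {x : x_{ij} = w_i + w̃_j, w, w̃ ≥ 0}`. -/
def coneK (n : ℕ) : Set (Fin n → Fin n → ℝ) :=
  {x | ∃ w wt : Fin n → ℝ, (∀ i, 0 ≤ w i) ∧ (∀ j, 0 ≤ wt j) ∧ ∀ i j, x i j = w i + wt j}

/-- Embedding of queue states into `ℝ^{n×n}`. -/
def toR (n : ℕ) (q : Fin n → Fin n → ℕ) : Fin n → Fin n → ℝ :=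
  fun i j => (q i j : ℝ)

/-- `proj` is the nearest-point projection onto the cone `K`. -/
def IsConeProj (n : ℕ) (proj : (Fin n → Fin n → ℝ) → (Fin n → Fin n → ℝ)) : Prop :=
  ∀ x, proj x ∈ coneK n ∧ ∀ y ∈ coneK n, normE n (x - proj x) ≤ normE n (x - y)

/-- Bernoulli distribution on `ℕ` with success probability `p`. -/
noncomputable def bern (p : ℝ) : ℕ → ℝ≥0∞ :=
  fun k => if k = 0 then ENNReal.ofReal (1 - p) else if k = 1 then ENNReal.ofReal p else 0

end SwitchModel

open SwitchModel

/-!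
Write `p` for the component of the queue matrix `q` orthogonal to the cone `K`. Since `p` lies in
the polar cone of `K`, its row and column sums are nonpositive, so the test matrix `ν + (v / ‖p‖) p`
is nonnegative with row and column sums at most `1`. It is dominated by a doubly stochastic matrix,
hence, by Birkhoff's theorem, MaxWeight serves at least `⟪q, ν + (v / ‖p‖) p⟫`. As `⟪q, p⟫ = ‖p‖²`
and `K` does not distinguish matrices with equal row and column sums, this says that
`⟪p, ν - s⟫ ≤ -v ‖p‖`. Expanding the square, `‖p‖` has drift at most `-v / 4` wherever it is large,
and its jumps are at most `n * amax`.

Let `V` have jumps at most `D`, and drift at most `-η` above `κ`. Clamped to `[c, N]` it is bounded,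
so its mean drift under an invariant law vanishes; with `κ ≤ c + D` and `N → ∞` this yields
`(D + η) P(V > c + D) ≤ D P(V > c - D)`. The tail of `V` is therefore geometric, and Stirling's
bound `r! ≤ √r e (r / e) ^ r` on its `r`-th moment produces the constant.
-/

namespace SwitchModel

open MeasureTheory ProbabilityTheory
open scoped RealInnerProductSpace

lemma pow_succ_le_factorial_mul_sum_choose (k m : ℕ) :
    m ^ (k + 1) ≤ (k + 1).factorial * ∑ i ∈ Finset.range m, (i + k).choose k := by
  cases m with
  | zero => simp
  | succ m =>
    rw [Nat.sum_range_add_choose, add_assoc, ← Nat.ascFactorial_eq_factorial_mul_choose]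
    exact Nat.pow_succ_le_ascFactorial (m + 1) (k + 1)

section Moments

variable {X : Type*} [MeasurableSpace X] {μ : Measure X}

lemma lintegral_sum_range {M : X → ℕ} (hM : Measurable M) (g : ℕ → ℝ≥0∞) :
    ∫⁻ x, ∑ i ∈ Finset.range (M x), g i ∂μ = ∑' i, g i * μ {x | i < M x} := by
  have hset (i : ℕ) : MeasurableSet {x | i < M x} := measurableSet_lt measurable_const hM
  have hsum (x : X) : ∑ i ∈ Finset.range (M x), g i =
      ∑' i, {x | i < M x}.indicator (fun _ => g i) x := by
    rw [sum_eq_tsum_indicator]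
    simp [Set.indicator]
  simp_rw [hsum]
  rw [lintegral_tsum fun i => (measurable_const.indicator (hset i)).aemeasurable]
  simp [hset]

lemma lintegral_natCast_pow_succ_le {ρ : ℝ} (hρ₀ : 0 ≤ ρ) (hρ₁ : ρ < 1) {M : X → ℕ}
    (hM : Measurable M) (htail : ∀ m, μ {x | m < M x} ≤ ENNReal.ofReal (ρ ^ m)) (k : ℕ) :
    ∫⁻ x, (M x : ℝ≥0∞) ^ (k + 1) ∂μ ≤
      ENNReal.ofReal ((k + 1).factorial / (1 - ρ) ^ (k + 1)) := by
  have hsum := hasSum_choose_mul_geometric_of_norm_lt_one k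
    (by rwa [Real.norm_of_nonneg hρ₀] : ‖ρ‖ < 1)
  calc ∫⁻ x, (M x : ℝ≥0∞) ^ (k + 1) ∂μ
      ≤ ∫⁻ x, (k + 1).factorial *
          ∑ i ∈ Finset.range (M x), ((i + k).choose k : ℝ≥0∞) ∂μ :=
        lintegral_mono fun x => by
          simpa using Nat.cast_le (α := ℝ≥0∞).2 (pow_succ_le_factorial_mul_sum_choose k (M x))
    _ = (k + 1).factorial * ∑' i, ((i + k).choose k : ℝ≥0∞) * μ {x | i < M x} := by
        rw [lintegral_const_mul' _ _ (ENNReal.natCast_ne_top _), lintegral_sum_range hM]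
    _ ≤ (k + 1).factorial * ∑' i, ENNReal.ofReal ((i + k).choose k * ρ ^ i) := by
        gcongr with i
        rw [ENNReal.ofReal_mul (by positivity), ENNReal.ofReal_natCast]
        gcongr
        exact htail i
    _ = ENNReal.ofReal ((k + 1).factorial / (1 - ρ) ^ (k + 1)) := by
        rw [← ENNReal.ofReal_tsum_of_nonneg (fun i => by positivity) hsum.summable, hsum.tsum_eq,
          ← ENNReal.ofReal_natCast, ← ENNReal.ofReal_mul (by positivity), mul_one_div]

lemma lintegral_pow_succ_le_of_tail [IsProbabilityMeasure μ] {V : X → ℝ} (hV : Measurable V)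
    (hV₀ : ∀ x, 0 ≤ V x) {κ B ρ : ℝ} (hκ : 0 ≤ κ) (hB : 0 < B) (hρ₀ : 0 ≤ ρ) (hρ₁ : ρ < 1)
    (htail : ∀ m : ℕ, μ.real {x | κ + m * B < V x} ≤ ρ ^ m) (k : ℕ) :
    ∫⁻ x, ENNReal.ofReal (V x ^ (k + 1)) ∂μ ≤ ENNReal.ofReal
      (2 ^ k * (κ ^ (k + 1) + B ^ (k + 1) * ((k + 1).factorial / (1 - ρ) ^ (k + 1)))) := by
  have : 0 < 1 - ρ := sub_pos.2 hρ₁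
  set M : X → ℕ := fun x => ⌈(V x - κ) / B⌉₊ with hMdef
  have hM : Measurable M := Nat.measurable_ceil.comp ((hV.sub_const κ).div_const B)
  have hMtail (m : ℕ) : μ {x | m < M x} ≤ ENNReal.ofReal (ρ ^ m) := by
    have : {x | m < M x} = {x | κ + m * B < V x} := by
      ext x
      simp [hMdef, Nat.lt_ceil, lt_div_iff₀ hB, lt_sub_iff_add_lt']
    rw [this, ← ofReal_measureReal]
    exact ENNReal.ofReal_le_ofReal (htail m)
  have hle (x : X) : ENNReal.ofReal (V x ^ (k + 1)) ≤
      ENNReal.ofReal (2 ^ k * κ ^ (k + 1)) +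
        ENNReal.ofReal (2 ^ k * B ^ (k + 1)) * (M x : ℝ≥0∞) ^ (k + 1) := by
    have hVM : V x ≤ κ + B * M x := by
      linarith [(div_le_iff₀' hB).1 (Nat.le_ceil ((V x - κ) / B))]
    rw [← ENNReal.ofReal_natCast, ← ENNReal.ofReal_pow (by positivity),
      ← ENNReal.ofReal_mul (by positivity), ← ENNReal.ofReal_add (by positivity) (by positivity)]
    refine ENNReal.ofReal_le_ofReal ?_
    calc V x ^ (k + 1) ≤ (κ + B * M x) ^ (k + 1) := pow_le_pow_left₀ (hV₀ x) hVM _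
      _ ≤ 2 ^ k * (κ ^ (k + 1) + (B * M x) ^ (k + 1)) := add_pow_le hκ (by positivity) _
      _ = 2 ^ k * κ ^ (k + 1) + 2 ^ k * B ^ (k + 1) * (M x : ℝ) ^ (k + 1) := by ring
  calc ∫⁻ x, ENNReal.ofReal (V x ^ (k + 1)) ∂μ
      ≤ ENNReal.ofReal (2 ^ k * κ ^ (k + 1)) +
          ENNReal.ofReal (2 ^ k * B ^ (k + 1)) * ∫⁻ x, (M x : ℝ≥0∞) ^ (k + 1) ∂μ := by
        refine (lintegral_mono hle).trans_eq ?_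
        rw [lintegral_add_left measurable_const, lintegral_const, measure_univ, mul_one,
          lintegral_const_mul' _ _ ENNReal.ofReal_ne_top]
    _ ≤ _ := by
        grw [lintegral_natCast_pow_succ_le hρ₀ hρ₁ hM hMtail]
        rw [← ENNReal.ofReal_mul (by positivity),
          ← ENNReal.ofReal_add (by positivity) (by positivity)]
        exact le_of_eq (by ring_nf)

lemma integral_le_of_sq_le [IsProbabilityMeasure μ] {Y G : X → ℝ} (hY : 0 ≤ Y)
    (hYG : ∀ x, Y x ^ 2 ≤ G x) (hG : Integrable G μ) {b : ℝ} (hb : 0 < b) :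
    ∫ x, Y x ∂μ ≤ (∫ x, G x ∂μ + b ^ 2) / (2 * b) := by
  have hle (x : X) : Y x ≤ (G x + b ^ 2) / (2 * b) := by
    rw [le_div_iff₀ (by positivity)]
    nlinarith [hYG x, sq_nonneg (Y x - b)]
  calc ∫ x, Y x ∂μ ≤ ∫ x, (G x + b ^ 2) / (2 * b) ∂μ :=
        integral_mono_of_nonneg (ae_of_all _ hY)
          ((hG.add (integrable_const _)).div_const _) (ae_of_all _ hle)
    _ = _ := by
        rw [integral_div, integral_add hG (integrable_const _), integral_const, probReal_univ,
          one_smul]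

end Moments

section Chain

variable {X : Type*} [MeasurableSpace X]

/-- Foster–Lyapunov condition: `V` jumps by at most `D` under `P` and has drift at most `-η` where
it exceeds `κ`. The jump bound makes a measurable `V` integrable under the finite measure `P x`, so
that `integral_le` is never about the junk value `0`. -/
structure HasNegativeDrift (P : Kernel X X) (V : X → ℝ) (D η κ : ℝ) : Prop where
  abs_sub_le : ∀ x, ∀ᵐ y ∂P x, |V y - V x| ≤ D
  integral_le : ∀ x, κ < V x → ∫ y, V y ∂P x ≤ V x - η

lemma abs_clamp_le (c N t : ℝ) : |min (max t c) N| ≤ |c| + |N| := by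
  grind

lemma integrable_clamp {μ : Measure X} [IsFiniteMeasure μ] {f : X → ℝ} (hf : Measurable f)
    (c N : ℝ) : Integrable (fun x => min (max (f x) c) N) μ :=
  .of_bound ((hf.max measurable_const).min measurable_const).aestronglyMeasurable (|c| + |N|)
    (ae_of_all _ fun x => abs_clamp_le c N (f x))

variable {P : Kernel X X} {V : X → ℝ} {D η κ c N : ℝ}

lemma integral_clamp_add_indicator_le [IsMarkovKernel P] (h : HasNegativeDrift P V D η κ)
    (hV : Measurable V) (hD : 0 ≤ D) (hκ : κ ≤ c + D) (hN : c + D ≤ N) (x : X) :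
    (∫ y, min (max (V y) c) N ∂P x) + (V ⁻¹' Set.Ioc (c + D) N).indicator (fun _ => η) x ≤
      min (max (V x) c) N + (V ⁻¹' Set.Ioc (c - D) (c + D)).indicator (fun _ => D) x := by
  have hle_of_ae {b : ℝ} (hb : ∀ᵐ y ∂P x, min (max (V y) c) N ≤ b) :
      ∫ y, min (max (V y) c) N ∂P x ≤ b := by
    simpa using integral_mono_ae (integrable_clamp hV c N) (integrable_const b) hb
  have hjump := h.abs_sub_le x
  simp only [Set.indicator, Set.mem_preimage, Set.mem_Ioc]
  rcases le_or_gt (V x) (c + D) with hlow | hhigh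
  · have : ∀ᵐ y ∂P x, min (max (V y) c) N ≤ min (max (V x) c) N + if c - D < V x then D else 0 := by
      filter_upwards [hjump] with y hy
      grind
    simpa [hlow, hlow.not_gt] using hle_of_ae this
  rcases le_or_gt (V x) N with hmid | htop
  · have hint : Integrable V (P x) := by
      refine .of_bound hV.aestronglyMeasurable (|V x| + D) ?_
      filter_upwards [hjump] with y hy
      rw [Real.norm_eq_abs]
      grind
    have : ∫ y, min (max (V y) c) N ∂P x ≤ ∫ y, V y ∂P x :=
      integral_mono_ae (integrable_clamp hV c N) hint <| by
        filter_upwards [hjump] with y hy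
        grind
    have := h.integral_le x (hκ.trans_lt hhigh)
    grind
  · have := hle_of_ae (ae_of_all _ fun y => min_le_right (max (V y) c) N)
    grind

variable {π : Measure X}

lemma integral_integral_of_invariant {E : Type*} [NormedAddCommGroup E] [NormedSpace ℝ E]
    (hπ : P.Invariant π) {f : X → E} (hf : Integrable f π) :
    ∫ x, ∫ y, f y ∂P x ∂π = ∫ x, f x ∂π := by
  rw [← hπ.def, Measure.comp_eq_comp_const_apply] at hf
  rw [← Kernel.const_apply π (), ← Kernel.integral_comp hf,
    ← Measure.comp_eq_comp_const_apply, hπ.def, Kernel.const_apply]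

variable [IsMarkovKernel P]

lemma drift_mul_measureReal_Ioc_le [IsFiniteMeasure π] (hπ : P.Invariant π)
    (h : HasNegativeDrift P V D η κ) (hV : Measurable V)
    (hD : 0 ≤ D) (hκ : κ ≤ c + D) (hN : c + D ≤ N) :
    η * π.real (V ⁻¹' Set.Ioc (c + D) N) ≤ D * π.real (V ⁻¹' Set.Ioc (c - D) (c + D)) := by
  have hclamp := integrable_clamp (μ := π) hV c N
  have hind (I : Set ℝ) (hI : MeasurableSet I) (b : ℝ) :
      Integrable ((V ⁻¹' I).indicator fun _ => b) π ∧
        ∫ x, (V ⁻¹' I).indicator (fun _ => b) x ∂π = b * π.real (V ⁻¹' I) :=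
    ⟨(integrable_const b).indicator (hV hI), by
      rw [integral_indicator_const b (hV hI), smul_eq_mul, mul_comm]⟩
  obtain ⟨hint₁, heq₁⟩ := hind _ (measurableSet_Ioc (a := c + D) (b := N)) η
  obtain ⟨hint₂, heq₂⟩ := hind _ (measurableSet_Ioc (a := c - D) (b := c + D)) D
  have hint : Integrable (fun x => ∫ y, min (max (V y) c) N ∂P x) π := by
    rw [← hπ.def, Measure.comp_eq_comp_const_apply] at hclamp
    simpa using hclamp.integral_comp
  have hmono := integral_mono (hint.add hint₁) (hclamp.add hint₂)
    (integral_clamp_add_indicator_le h hV hD hκ hN)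
  simp only [Pi.add_apply] at hmono
  rw [integral_add hint hint₁, integral_add hclamp hint₂,
    integral_integral_of_invariant hπ hclamp, heq₁, heq₂] at hmono
  linarith

lemma mul_measureReal_tail_le [IsFiniteMeasure π] (hπ : P.Invariant π)
    (h : HasNegativeDrift P V D η κ) (hV : Measurable V)
    (hD : 0 ≤ D) (hκ : κ ≤ c + D) :
    (D + η) * π.real {x | c + D < V x} ≤ D * π.real {x | c - D < V x} := by
  have htop : η * π.real {x | c + D < V x} ≤ D * π.real (V ⁻¹' Set.Ioc (c - D) (c + D)) := by
    have hmono : Monotone fun N : ℕ => V ⁻¹' Set.Ioc (c + D) (c + D + N) :=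
      fun M N hMN => Set.preimage_mono (Set.Ioc_subset_Ioc_right (by gcongr))
    have hUnion : ⋃ N : ℕ, V ⁻¹' Set.Ioc (c + D) (c + D + N) = {x | c + D < V x} := by
      ext x
      obtain ⟨N, hN⟩ := exists_nat_ge (V x - (c + D))
      simpa using fun _ => ⟨N, by linarith⟩
    have hlim := tendsto_measure_iUnion_atTop (μ := π) hmono
    rw [hUnion] at hlim
    refine le_of_tendsto (((ENNReal.tendsto_toReal (measure_ne_top π _)).comp hlim).const_mul η)
      (.of_forall fun N => ?_)
    exact drift_mul_measureReal_Ioc_le hπ h hV hD hκ (by simp)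
  have hsplit : π.real {x | c - D < V x} =
      π.real (V ⁻¹' Set.Ioc (c - D) (c + D)) + π.real {x | c + D < V x} := by
    rw [← measureReal_union ?_ (measurableSet_lt measurable_const hV)]
    · congr 1
      ext x
      grind
    · exact Set.disjoint_left.2 fun x hx hx' => hx.2.not_gt hx'
  rw [hsplit]
  linarith

lemma measureReal_tail_le_pow [IsProbabilityMeasure π] (hπ : P.Invariant π)
    (h : HasNegativeDrift P V D η κ) (hV : Measurable V)
    (hD : 0 < D) (hη : 0 < η) (m : ℕ) :
    π.real {x | κ + m * (2 * D) < V x} ≤ (D / (D + η)) ^ m := by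
  induction m with
  | zero => simp
  | succ m ih =>
    have hstep := mul_measureReal_tail_le (c := κ + m * (2 * D) + D) hπ h hV hD.le
      (by have : 0 ≤ m * (2 * D) := by positivity
          linarith)
    calc π.real {x | κ + (m + 1 : ℕ) * (2 * D) < V x}
        = π.real {x | κ + m * (2 * D) + D + D < V x} := by
          congr! 4
          push_cast
          ring
      _ ≤ D / (D + η) * π.real {x | κ + m * (2 * D) + D - D < V x} := by
          rwa [div_mul_eq_mul_div, le_div_iff₀' (by positivity)]
      _ ≤ (D / (D + η)) ^ (m + 1) := by
          rw [add_sub_cancel_right, pow_succ']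
          gcongr

lemma lintegral_pow_succ_le_of_hasNegativeDrift [IsProbabilityMeasure π] (hπ : P.Invariant π)
    (h : HasNegativeDrift P V D η κ) (hV : Measurable V) (hV₀ : ∀ x, 0 ≤ V x)
    (hD : 0 < D) (hη : 0 < η) (hκ : 0 ≤ κ) (k : ℕ) :
    ∫⁻ x, ENNReal.ofReal (V x ^ (k + 1)) ∂π ≤ ENNReal.ofReal (2 ^ k *
      (κ ^ (k + 1) + (2 * D) ^ (k + 1) * ((k + 1).factorial * ((D + η) / η) ^ (k + 1)))) := by
  have hρ : D / (D + η) < 1 := (div_lt_one (by positivity)).2 (by linarith)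
  refine (lintegral_pow_succ_le_of_tail hV hV₀ hκ (by positivity : 0 < 2 * D) (by positivity) hρ
    (measureReal_tail_le_pow hπ h hV hD hη) k).trans_eq ?_
  have : 1 - D / (D + η) = ((D + η) / η)⁻¹ := by
    field_simp
    ring
  rw [this, inv_pow, div_inv_eq_mul]

end Chain

section Constants

lemma factorial_le_sqrt_mul_exp_mul_pow {r : ℕ} (hr : 1 ≤ r) :
    (r.factorial : ℝ) ≤ √r * Real.exp 1 * (r / Real.exp 1) ^ r := by
  obtain ⟨k, rfl⟩ := Nat.exists_eq_add_of_le' hr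
  have h := Stirling.stirlingSeq'_antitone (Nat.zero_le k)
  simp only [Function.comp, Nat.succ_eq_add_one, zero_add, Stirling.stirlingSeq_one] at h
  rw [Stirling.stirlingSeq, div_le_iff₀ (by positivity)] at h
  refine h.trans_eq ?_
  rw [Real.sqrt_mul zero_le_two]
  field_simp

lemma factorial_mul_pow_le {r : ℕ} (hr : 1 ≤ r) {v D : ℝ} (hv : 0 < v) (hv₁ : v ≤ 1)
    (hD : 0 ≤ D) :
    r.factorial * (2 * (2 * D) * ((D + v / 4) / (v / 4))) ^ r ≤
      ((√r * Real.exp 1) ^ ((1 : ℝ) / r) * 16 * (r / Real.exp 1) * (D / v) * (D + 1)) ^ r := by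
  calc r.factorial * (2 * (2 * D) * ((D + v / 4) / (v / 4))) ^ r
      ≤ √r * Real.exp 1 * (r / Real.exp 1) ^ r * (2 * (2 * D) * ((D + 1) / (v / 4))) ^ r := by
        gcongr
        · exact factorial_le_sqrt_mul_exp_mul_pow hr
        · linarith
    _ = ((√r * Real.exp 1) ^ ((1 : ℝ) / r)) ^ r * (r / Real.exp 1) ^ r *
          (2 * (2 * D) * ((D + 1) / (v / 4))) ^ r := by
        rw [one_div, Real.rpow_inv_natCast_pow (by positivity) (Nat.one_le_iff_ne_zero.1 hr)]
    _ = _ := by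
        rw [← mul_pow, ← mul_pow]
        congr 1
        field_simp
        ring

lemma moment_const_le {r : ℕ} (hr : 1 ≤ r) {L v D : ℝ} (hL : 0 ≤ L) (hv : 0 < v) (hv₁ : v ≤ 1)
    (hD : 0 ≤ D) :
    2 ^ (r - 1) * ((2 * L / v) ^ r + (2 * D) ^ r * (r.factorial * ((D + v / 4) / (v / 4)) ^ r)) ≤
      ((2 : ℝ) ^ ((1 : ℝ) / r) * max (8 * L / v) ((√r * Real.exp 1) ^ ((1 : ℝ) / r) * 16 *
        (r / Real.exp 1) * (D / v) * (D + 1))) ^ r := by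
  have hX : 2 * (2 * L / v) ≤ 8 * L / v := by
    calc 2 * (2 * L / v) = 4 * L / v := by ring
      _ ≤ 8 * L / v := by
        gcongr
        norm_num
  set X := 8 * L / v
  set Y := (√r * Real.exp 1) ^ ((1 : ℝ) / r) * 16 * (r / Real.exp 1) * (D / v) * (D + 1)
  calc 2 ^ (r - 1) * ((2 * L / v) ^ r + (2 * D) ^ r * (r.factorial * ((D + v / 4) / (v / 4)) ^ r))
      ≤ 2 ^ r * ((2 * L / v) ^ r + (2 * D) ^ r * (r.factorial * ((D + v / 4) / (v / 4)) ^ r)) := by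
        gcongr
        · exact one_le_two
        · exact Nat.sub_le r 1
    _ = (2 * (2 * L / v)) ^ r + r.factorial * (2 * (2 * D) * ((D + v / 4) / (v / 4))) ^ r := by
        rw [mul_pow (2 * (2 * D)), mul_pow 2 (2 * D), mul_pow 2 (2 * L / v)]
        ring
    _ ≤ X ^ r + Y ^ r := by
        gcongr
        exact factorial_mul_pow_le hr hv hv₁ hD
    _ ≤ max X Y ^ r + max X Y ^ r := by
        gcongr
        · exact le_max_left X Y
        · exact le_max_right X Y
    _ = ((2 : ℝ) ^ ((1 : ℝ) / r) * max X Y) ^ r := by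
        rw [mul_pow, one_div,
          Real.rpow_inv_natCast_pow zero_le_two (Nat.one_le_iff_ne_zero.1 hr), two_mul]

end Constants

section Birkhoff

variable {ι : Type*} [Fintype ι] [DecidableEq ι]

lemma sum_mul_le_of_mem_doublyStochastic {x m : Matrix ι ι ℝ} {b : ℝ}
    (hm : m ∈ doublyStochastic ℝ ι) (hb : ∀ σ : Equiv.Perm ι, ∑ i, x i (σ i) ≤ b) :
    ∑ i, ∑ j, x i j * m i j ≤ b := by
  obtain ⟨w, hw₀, hw₁, rfl⟩ := exists_eq_sum_perm_of_mem_doublyStochastic hm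
  calc ∑ i, ∑ j, x i j * (∑ σ, w σ • σ.permMatrix ℝ) i j
      = ∑ i, ∑ σ, w σ * x i (σ i) := by
        refine Finset.sum_congr rfl fun i _ => ?_
        simp only [Matrix.sum_apply, Finset.mul_sum]
        rw [Finset.sum_comm]
        simp [Equiv.Perm.permMatrix, PEquiv.toMatrix_apply, mul_comm]
    _ = ∑ σ, w σ * ∑ i, x i (σ i) := by
        simp only [Finset.mul_sum]
        exact Finset.sum_comm
    _ ≤ ∑ σ, w σ * b := by
        gcongr with σ
        · exact hw₀ σ
        · exact hb σ
    _ = b := by rw [← Finset.sum_mul, hw₁, one_mul]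

lemma exists_mem_doublyStochastic_ge {m : Matrix ι ι ℝ} (hm : ∀ i j, 0 ≤ m i j)
    (hrow : ∀ i, ∑ j, m i j ≤ 1) (hcol : ∀ j, ∑ i, m i j ≤ 1) :
    ∃ m' ∈ doublyStochastic ℝ ι, ∀ i j, m i j ≤ m' i j := by
  set R : ι → ℝ := fun i => 1 - ∑ j, m i j with hR
  set C : ι → ℝ := fun j => 1 - ∑ i, m i j with hC
  have hR₀ (i : ι) : 0 ≤ R i := sub_nonneg.2 (hrow i)
  have hC₀ (j : ι) : 0 ≤ C j := sub_nonneg.2 (hcol j)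
  have htotal : ∑ j, C j = ∑ i, R i := by
    simp only [hR, hC, Finset.sum_sub_distrib]
    rw [Finset.sum_comm]
  have hcancel {d : ι → ℝ} (hd : ∀ i, 0 ≤ d i) (hdR : ∑ i, d i = ∑ i, R i) (i : ι) :
      d i * (∑ i, R i) / ∑ i, R i = d i := by
    rcases eq_or_ne (∑ i, R i) 0 with h0 | h0
    · rw [← hdR, Finset.sum_eq_zero_iff_of_nonneg fun i _ => hd i] at h0
      simp [h0 i (Finset.mem_univ i)]
    · rw [mul_div_cancel_right₀ _ h0]
  refine ⟨fun i j => m i j + R i * C j / ∑ i, R i, mem_doublyStochastic_iff_sum.2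
    ⟨fun i j => ?_, fun i => ?_, fun j => ?_⟩, fun i j => ?_⟩
  · have := hm i j
    have := hR₀ i
    have := hC₀ j
    have := Finset.sum_nonneg fun i (_ : i ∈ Finset.univ) => hR₀ i
    positivity
  · rw [Finset.sum_add_distrib, ← Finset.sum_div, ← Finset.mul_sum, htotal, hcancel hR₀ rfl]
    simp [hR]
  · rw [Finset.sum_add_distrib, ← Finset.sum_div, ← Finset.sum_mul, mul_comm,
      hcancel hC₀ htotal]
    simp [hC]
  · have := Finset.sum_nonneg fun i (_ : i ∈ Finset.univ) => hR₀ i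
    have := mul_nonneg (hR₀ i) (hC₀ j)
    simp only [le_add_iff_nonneg_right]
    positivity

end Birkhoff

section InnerProductSpace

variable {E : Type*} [NormedAddCommGroup E] [InnerProductSpace ℝ E]

lemma inner_sub_nearest_sub_nonpos {K : Set E} (hK : Convex ℝ K) {u p : E} (hp : p ∈ K)
    (hmin : ∀ y ∈ K, ‖u - p‖ ≤ ‖u - y‖) : ∀ y ∈ K, ⟪u - p, y - p⟫ ≤ 0 := by
  have hinf : ‖u - p‖ = ⨅ y : K, ‖u - y‖ := by
    have : Nonempty K := ⟨p, hp⟩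
    exact le_antisymm (le_ciInf fun y => hmin y y.2)
      (ciInf_le ⟨0, by rintro _ ⟨y, rfl⟩; positivity⟩ (⟨p, hp⟩ : K))
  exact (norm_eq_iInf_iff_real_inner_le_zero hK hp).1 hinf

variable {K : PointedCone ℝ E} {u p : E}

lemma inner_sub_nearest_nonpos (hp : p ∈ K) (hmin : ∀ y ∈ K, ‖u - p‖ ≤ ‖u - y‖) {y : E}
    (hy : y ∈ K) : ⟪u - p, y⟫ ≤ 0 := by
  simpa using inner_sub_nearest_sub_nonpos K.convex hp hmin (y + p) (K.add_mem hy hp)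

lemma inner_sub_nearest_self (hp : p ∈ K) (hmin : ∀ y ∈ K, ‖u - p‖ ≤ ‖u - y‖) :
    ⟪u - p, p⟫ = 0 := by
  refine le_antisymm (inner_sub_nearest_nonpos hp hmin hp) ?_
  simpa using inner_sub_nearest_sub_nonpos K.convex hp hmin 0 K.zero_mem

end InnerProductSpace

section Geometry

variable {n : ℕ}

/-- The matrix `x` as a vector of the Euclidean space whose norm is `normE`. -/
noncomputable def vec (n : ℕ) :
    (Fin n → Fin n → ℝ) →ₗ[ℝ] EuclideanSpace ℝ (Fin n × Fin n) :=
  (WithLp.linearEquiv 2 ℝ (Fin n × Fin n → ℝ)).symm.toLinearMap ∘ₗ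
    (LinearEquiv.curry ℝ ℝ (Fin n) (Fin n)).symm.toLinearMap

lemma vec_apply (x : Fin n → Fin n → ℝ) (p : Fin n × Fin n) : vec n x p = x p.1 p.2 := rfl

lemma inner_vec (x y : Fin n → Fin n → ℝ) : ⟪vec n x, vec n y⟫ = ∑ i, ∑ j, x i j * y i j := by
  simp [PiLp.inner_apply, vec_apply, Fintype.sum_prod_type, mul_comm]

lemma norm_vec (x : Fin n → Fin n → ℝ) : ‖vec n x‖ = normE n x := by
  simp [EuclideanSpace.norm_eq, normE, vec_apply, Fintype.sum_prod_type]

lemma normE_nonneg (x : Fin n → Fin n → ℝ) : 0 ≤ normE n x := Real.sqrt_nonneg _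

lemma normE_sq (x : Fin n → Fin n → ℝ) : normE n x ^ 2 = ∑ i, ∑ j, x i j ^ 2 :=
  Real.sq_sqrt (by positivity)

lemma normE_add_le (x y : Fin n → Fin n → ℝ) : normE n (x + y) ≤ normE n x + normE n y := by
  simpa only [← norm_vec, map_add] using norm_add_le (vec n x) (vec n y)

lemma abs_apply_le_normE (x : Fin n → Fin n → ℝ) (i j : Fin n) : |x i j| ≤ normE n x := by
  rw [← norm_vec]
  exact PiLp.norm_apply_le (vec n x) (i, j)

lemma normE_le_normE {x y : Fin n → Fin n → ℝ} (h : ∀ i j, |x i j| ≤ |y i j|) :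
    normE n x ≤ normE n y :=
  Real.sqrt_le_sqrt <| Finset.sum_le_sum fun i _ => Finset.sum_le_sum fun j _ => sq_le_sq.2 (h i j)

lemma normE_one_sub_mul_sub_le {ν : Fin n → Fin n → ℝ} {v ε : ℝ} (hε₀ : 0 < ε)
    (hε : ε ≤ v / (2 * normE n ν)) :
    normE n ((fun i j => (1 - ε) * ν i j) - ν) ≤ v / 2 := by
  have hscale : normE n ((fun i j => (1 - ε) * ν i j) - ν) = ε * normE n ν := by
    have : (fun i j => (1 - ε) * ν i j) - ν = -(ε • ν) := by
      ext i j
      simp only [Pi.sub_apply, Pi.neg_apply, Pi.smul_apply, smul_eq_mul]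
      ring
    rw [this, ← norm_vec, map_neg, map_smul, norm_neg, norm_smul, norm_vec,
      Real.norm_of_nonneg hε₀.le]
  have hν : 0 < normE n ν := (normE_nonneg ν).lt_of_ne' fun h => by
    rw [h, mul_zero, div_zero] at hε
    exact hε.not_gt hε₀
  rw [le_div_iff₀ (by positivity)] at hε
  linarith

/-- `coneK`, bundled as a pointed cone. -/
def pointedConeK (n : ℕ) : PointedCone ℝ (Fin n → Fin n → ℝ) where
  carrier := coneK n
  zero_mem' := ⟨0, 0, by simp, by simp, by simp⟩
  add_mem' := by
    rintro x y ⟨w, wt, hw, hwt, hx⟩ ⟨u, ut, hu, hut, hy⟩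
    refine ⟨w + u, wt + ut, fun i => add_nonneg (hw i) (hu i), fun j => add_nonneg (hwt j) (hut j),
      fun i j => ?_⟩
    simp only [Pi.add_apply, hx, hy]
    ring
  smul_mem' := by
    rintro c x ⟨w, wt, hw, hwt, hx⟩
    refine ⟨c • w, c • wt, fun i => smul_nonneg c.2 (hw i), fun j => smul_nonneg c.2 (hwt j),
      fun i j => ?_⟩
    simp [hx]

lemma row_indicator_mem_coneK (i : Fin n) :
    (fun k _ => if k = i then 1 else 0 : Fin n → Fin n → ℝ) ∈ coneK n :=
  ⟨fun k => if k = i then 1 else 0, 0, fun k => by positivity, by simp, by simp⟩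

lemma col_indicator_mem_coneK (j : Fin n) :
    (fun _ k => if k = j then 1 else 0 : Fin n → Fin n → ℝ) ∈ coneK n :=
  ⟨0, fun k => if k = j then 1 else 0, by simp, fun k => by positivity, by simp⟩

lemma nonneg_of_mem_coneK {x : Fin n → Fin n → ℝ} (hx : x ∈ coneK n) (i j : Fin n) :
    0 ≤ x i j := by
  obtain ⟨w, wt, hw, hwt, hx⟩ := hx
  exact hx i j ▸ add_nonneg (hw i) (hwt j)

lemma inner_vec_eq_of_mem_coneK {x y z : Fin n → Fin n → ℝ} (hx : x ∈ coneK n)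
    (hrow : ∀ i, ∑ j, y i j = ∑ j, z i j) (hcol : ∀ j, ∑ i, y i j = ∑ i, z i j) :
    ⟪vec n x, vec n y⟫ = ⟪vec n x, vec n z⟫ := by
  obtain ⟨w, wt, -, -, hx⟩ := hx
  simp only [inner_vec, hx, add_mul, Finset.sum_add_distrib]
  simp only [← Finset.mul_sum, hrow]
  congr 1
  rw [Finset.sum_comm]
  conv_rhs => rw [Finset.sum_comm]
  simp only [← Finset.mul_sum, hcol]

variable {proj : (Fin n → Fin n → ℝ) → (Fin n → Fin n → ℝ)}

lemma vec_mem_map_pointedConeK {y : Fin n → Fin n → ℝ} (hy : y ∈ coneK n) :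
    vec n y ∈ (pointedConeK n).map (vec n) := ⟨y, hy, rfl⟩

lemma norm_vec_sub_proj_le (hproj : IsConeProj n proj) (x : Fin n → Fin n → ℝ) :
    ∀ y ∈ (pointedConeK n).map (vec n), ‖vec n x - vec n (proj x)‖ ≤ ‖vec n x - y‖ := by
  rintro _ ⟨y, hy, rfl⟩
  simpa [← map_sub, norm_vec] using (hproj x).2 y hy

lemma inner_sub_proj_nonpos (hproj : IsConeProj n proj) (x : Fin n → Fin n → ℝ)
    {y : Fin n → Fin n → ℝ} (hy : y ∈ coneK n) : ⟪vec n (x - proj x), vec n y⟫ ≤ 0 := by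
  rw [map_sub]
  exact inner_sub_nearest_nonpos (vec_mem_map_pointedConeK (hproj x).1)
    (norm_vec_sub_proj_le hproj x) (vec_mem_map_pointedConeK hy)

lemma inner_sub_proj_proj (hproj : IsConeProj n proj) (x : Fin n → Fin n → ℝ) :
    ⟪vec n (x - proj x), vec n (proj x)⟫ = 0 := by
  rw [map_sub]
  exact inner_sub_nearest_self (vec_mem_map_pointedConeK (hproj x).1)
    (norm_vec_sub_proj_le hproj x)

lemma inner_self_sub_proj (hproj : IsConeProj n proj) (x : Fin n → Fin n → ℝ) :
    ⟪vec n x, vec n (x - proj x)⟫ = normE n (x - proj x) ^ 2 := by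
  have h := inner_sub_proj_proj hproj x
  rw [map_sub] at h ⊢
  rw [← norm_vec, map_sub, ← real_inner_self_eq_norm_sq, inner_sub_left _ _ (vec n x - _),
    real_inner_comm _ (vec n (proj x)), h, sub_zero]

lemma row_sum_sub_proj_nonpos (hproj : IsConeProj n proj) (x : Fin n → Fin n → ℝ) (i : Fin n) :
    ∑ j, (x - proj x) i j ≤ 0 := by
  have := inner_sub_proj_nonpos hproj x (row_indicator_mem_coneK i)
  rw [inner_vec] at this
  simpa using this

lemma col_sum_sub_proj_nonpos (hproj : IsConeProj n proj) (x : Fin n → Fin n → ℝ) (j : Fin n) :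
    ∑ i, (x - proj x) i j ≤ 0 := by
  have := inner_sub_proj_nonpos hproj x (col_indicator_mem_coneK j)
  rw [inner_vec] at this
  simpa using this

lemma normE_sub_proj_le_add (hproj : IsConeProj n proj) (x y : Fin n → Fin n → ℝ) :
    normE n (x - proj x) ≤ normE n (y - proj y) + normE n (x - y) := by
  calc normE n (x - proj x) ≤ normE n (x - proj y) := (hproj x).2 _ (hproj y).1
    _ = normE n ((y - proj y) + (x - y)) := by congr 1; abel
    _ ≤ _ := normE_add_le _ _

lemma abs_normE_sub_proj_sub_le (hproj : IsConeProj n proj) (x y : Fin n → Fin n → ℝ) :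
    |normE n (x - proj x) - normE n (y - proj y)| ≤ normE n (x - y) := by
  have hxy := normE_sub_proj_le_add hproj x y
  have hyx := normE_sub_proj_le_add hproj y x
  rw [← norm_vec (y - x), ← neg_sub x y, map_neg, norm_neg, norm_vec] at hyx
  grind

end Geometry

section MaxWeight

variable {n : ℕ} {sched : (Fin n → Fin n → ℕ) → (Fin n → Fin n → ℕ)}

lemma isPerm_of_equivPerm (σ : Equiv.Perm (Fin n)) :
    IsPerm n fun i j => if σ i = j then 1 else 0 := by
  refine ⟨fun i j => by dsimp only; split_ifs <;> simp, fun i => by simp, fun j => ?_⟩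
  simp [← Equiv.eq_symm_apply]

lemma inner_toR_le_of_isMaxWeight (hsched : IsMaxWeight n sched) (q : Fin n → Fin n → ℕ)
    {m : Fin n → Fin n → ℝ} (hm : ∀ i j, 0 ≤ m i j) (hrow : ∀ i, ∑ j, m i j ≤ 1)
    (hcol : ∀ j, ∑ i, m i j ≤ 1) :
    ⟪vec n (toR n q), vec n m⟫ ≤ ⟪vec n (toR n q), vec n (toR n (sched q))⟫ := by
  obtain ⟨m', hm', hle⟩ := exists_mem_doublyStochastic_ge hm hrow hcol
  simp only [inner_vec]
  calc ∑ i, ∑ j, toR n q i j * m i j ≤ ∑ i, ∑ j, toR n q i j * m' i j := by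
        gcongr with i _ j _
        · exact Nat.cast_nonneg _
        · exact hle i j
    _ ≤ ∑ i, ∑ j, toR n q i j * toR n (sched q) i j :=
        sum_mul_le_of_mem_doublyStochastic hm' fun σ => by
          simpa [toR] using
            Nat.cast_le (α := ℝ).2 ((hsched q).2 _ (isPerm_of_equivPerm σ))

variable {proj : (Fin n → Fin n → ℝ) → (Fin n → Fin n → ℝ)} {ν lam : Fin n → Fin n → ℝ} {v : ℝ}

-- For `p = 0` the convention `v / 0 = 0` turns the test matrix `ν + (v / ‖p‖) p` into `ν`.
lemma inner_toR_add_mul_inner_le (hsched : IsMaxWeight n sched) (hν : memF n ν) (hv : 0 ≤ v)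
    (hvν : ∀ i j, v ≤ ν i j) (q : Fin n → Fin n → ℕ) {p : Fin n → Fin n → ℝ}
    (hrow : ∀ i, ∑ j, p i j ≤ 0) (hcol : ∀ j, ∑ i, p i j ≤ 0) :
    ⟪vec n (toR n q), vec n ν⟫ + v / normE n p * ⟪vec n (toR n q), vec n p⟫ ≤
      ⟪vec n (toR n q), vec n (toR n (sched q))⟫ := by
  obtain ⟨-, hνrow, hνcol⟩ := hν
  set t := v / normE n p
  have ht : 0 ≤ t := div_nonneg hv (normE_nonneg p)
  have hm₀ (i j : Fin n) : 0 ≤ (ν + t • p) i j := by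
    have htp : t * |p i j| ≤ v := by
      calc t * |p i j| ≤ t * normE n p := by grw [abs_apply_le_normE p i j]
        _ = v * (normE n p / normE n p) := by rw [div_mul_eq_mul_div, mul_div_assoc]
        _ ≤ v := mul_le_of_le_one_right hv (div_self_le_one _)
    have hneg := neg_abs_le (t * p i j)
    rw [abs_mul, abs_of_nonneg ht] at hneg
    have := hvν i j
    simp only [Pi.add_apply, Pi.smul_apply, smul_eq_mul]
    linarith
  have hmrow (i : Fin n) : ∑ j, (ν + t • p) i j ≤ 1 := by
    simpa [Finset.sum_add_distrib, hνrow, ← Finset.mul_sum] using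
      mul_nonpos_of_nonneg_of_nonpos ht (hrow i)
  have hmcol (j : Fin n) : ∑ i, (ν + t • p) i j ≤ 1 := by
    simpa [Finset.sum_add_distrib, hνcol, ← Finset.mul_sum] using
      mul_nonpos_of_nonneg_of_nonpos ht (hcol j)
  rw [← inner_smul_right, ← inner_add_right, ← map_smul, ← map_add]
  exact inner_toR_le_of_isMaxWeight hsched q hm₀ hmrow hmcol

lemma inner_sub_proj_sub_schedule_le (hproj : IsConeProj n proj) (hsched : IsMaxWeight n sched)
    (hν : memF n ν) (hv : 0 ≤ v) (hvν : ∀ i j, v ≤ ν i j) (q : Fin n → Fin n → ℕ) :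
    ⟪vec n (toR n q - proj (toR n q)), vec n (ν - toR n (sched q))⟫ ≤
      -(v * normE n (toR n q - proj (toR n q))) := by
  have htest := inner_toR_add_mul_inner_le hsched hν hv hvν q
    (row_sum_sub_proj_nonpos hproj (toR n q)) (col_sum_sub_proj_nonpos hproj (toR n q))
  obtain ⟨-, hνrow, hνcol⟩ := hν
  obtain ⟨⟨-, hsrow, hscol⟩, -⟩ := hsched q
  have hface : ⟪vec n (proj (toR n q)), vec n ν⟫ =
      ⟪vec n (proj (toR n q)), vec n (toR n (sched q))⟫ :=
    inner_vec_eq_of_mem_coneK (hproj _).1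
      (fun i => by simpa [hνrow, toR] using (congrArg (Nat.cast (R := ℝ)) (hsrow i)).symm)
      (fun j => by simpa [hνcol, toR] using (congrArg (Nat.cast (R := ℝ)) (hscol j)).symm)
  rw [inner_self_sub_proj hproj, div_mul_eq_mul_div, mul_div_assoc, sq, mul_self_div_self] at htest
  rw [map_sub (vec n) ν, map_sub, inner_sub_left, inner_sub_right, inner_sub_right, hface]
  linarith

lemma inner_sub_proj_mean_sub_schedule_le (hproj : IsConeProj n proj)
    (hsched : IsMaxWeight n sched) (hν : memF n ν) (hv : 0 ≤ v) (hvν : ∀ i j, v ≤ ν i j)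
    (hlam : normE n (lam - ν) ≤ v / 2) (q : Fin n → Fin n → ℕ) :
    ⟪vec n (toR n q - proj (toR n q)), vec n (lam - toR n (sched q))⟫ ≤
      -(v / 2 * normE n (toR n q - proj (toR n q))) := by
  have hdrift := inner_sub_proj_sub_schedule_le hproj hsched hν hv hvν q
  set p := toR n q - proj (toR n q)
  have hcs : ⟪vec n p, vec n (lam - ν)⟫ ≤ normE n p * (v / 2) := by
    grw [real_inner_le_norm, norm_vec, norm_vec, hlam]
    exact normE_nonneg p
  rw [← sub_add_sub_cancel lam ν, map_add, inner_add_right]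
  linarith

end MaxWeight

section Queue

variable {n : ℕ}

/-- `α` is the law of an arrival matrix whose entries are at most `amax` and have mean `lam i j`
and variance `sig i j ^ 2`; the entries may be correlated. -/
structure IsArrivalLaw (n : ℕ) (α : Measure (Fin n → Fin n → ℕ)) (lam sig : Fin n → Fin n → ℝ)
    (amax : ℕ) : Prop where
  le_amax : ∀ᵐ a ∂α, ∀ i j, a i j ≤ amax
  mean : ∀ i j, ∫ a, (a i j : ℝ) ∂α = lam i j
  variance : ∀ i j, Var[fun a => (a i j : ℝ); α] = sig i j ^ 2

/-- Transition kernel of the switch with arrival law `α` under the scheduling map `sched`, the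
measure-theoretic counterpart of `kernelMW`. -/
noncomputable def switchKernel (n : ℕ) (α : Measure (Fin n → Fin n → ℕ))
    (sched : (Fin n → Fin n → ℕ) → (Fin n → Fin n → ℕ)) :
    Kernel (Fin n → Fin n → ℕ) (Fin n → Fin n → ℕ) :=
  .ofFunOfCountable fun q => α.map fun a => nextQ n q a (sched q)

variable {α : Measure (Fin n → Fin n → ℕ)} {lam sig : Fin n → Fin n → ℝ} {amax : ℕ}
  {sched : (Fin n → Fin n → ℕ) → (Fin n → Fin n → ℕ)}

lemma switchKernel_apply (q : Fin n → Fin n → ℕ) :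
    switchKernel n α sched q = α.map fun a => nextQ n q a (sched q) := rfl

instance [IsProbabilityMeasure α] : IsMarkovKernel (switchKernel n α sched) :=
  ⟨fun _ => Measure.isProbabilityMeasure_map (measurable_of_countable _).aemeasurable⟩

lemma abs_toR_nextQ_sub_le (q a s : Fin n → Fin n → ℕ) {c : Fin n → Fin n → ℝ} {i j : Fin n}
    (hc : 0 ≤ c i j) :
    |(toR n (nextQ n q a s) - c) i j| ≤ |(toR n q + toR n a - toR n s - c) i j| := by
  have hcast : toR n (nextQ n q a s) i j = max (toR n q i j + toR n a i j - toR n s i j) 0 := by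
    simp only [toR, nextQ]
    rcases le_total (s i j) (q i j + a i j) with h | h
    · have : (s i j : ℝ) ≤ q i j + a i j := mod_cast h
      rw [Nat.cast_sub h, Nat.cast_add, max_eq_left (by linarith)]
    · have : (q i j + a i j : ℝ) ≤ s i j := mod_cast h
      rw [Nat.sub_eq_zero_of_le h, Nat.cast_zero, max_eq_right (by linarith)]
  simp only [Pi.sub_apply, Pi.add_apply, hcast]
  grind

namespace IsArrivalLaw

lemma memLp [IsFiniteMeasure α] (h : IsArrivalLaw n α lam sig amax) (i j : Fin n) :
    MemLp (fun a => (a i j : ℝ)) 2 α :=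
  .of_bound (measurable_of_countable _).aestronglyMeasurable amax <| by
    filter_upwards [h.le_amax] with a ha
    simpa using ha i j

lemma mean_nonneg (h : IsArrivalLaw n α lam sig amax) (i j : Fin n) : 0 ≤ lam i j :=
  h.mean i j ▸ integral_nonneg fun _ => Nat.cast_nonneg _

variable [IsProbabilityMeasure α]

lemma integral_add_sq (h : IsArrivalLaw n α lam sig amax) (i j : Fin n) (c : ℝ) :
    ∫ a, ((a i j : ℝ) + c) ^ 2 ∂α = (lam i j + c) ^ 2 + sig i j ^ 2 := by
  have hL := (h.memLp i j).add (memLp_const c)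
  have hmean : ∫ a, ((a i j : ℝ) + c) ∂α = lam i j + c := by
    rw [integral_add ((h.memLp i j).integrable one_le_two) (integrable_const c), h.mean,
      integral_const, probReal_univ, one_smul]
  have hvar := variance_eq_sub hL
  simp only [Pi.add_def, Pi.pow_def] at hvar
  rw [variance_add_const (h.memLp i j).aestronglyMeasurable, h.variance, hmean] at hvar
  linarith

lemma integrable_normE_add_sq (h : IsArrivalLaw n α lam sig amax) (c : Fin n → Fin n → ℝ) :
    Integrable (fun a => normE n (toR n a + c) ^ 2) α := by
  simp only [normE_sq]
  exact integrable_finsetSum _ fun i _ => integrable_finsetSum _ fun j _ =>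
    ((h.memLp i j).add (memLp_const (c i j))).integrable_sq

lemma integral_normE_add_sq (h : IsArrivalLaw n α lam sig amax) (c : Fin n → Fin n → ℝ) :
    ∫ a, normE n (toR n a + c) ^ 2 ∂α = normE n (lam + c) ^ 2 + ∑ i, ∑ j, sig i j ^ 2 := by
  have hint (i j : Fin n) : Integrable (fun a => (toR n a i j + c i j) ^ 2) α :=
    ((h.memLp i j).add (memLp_const (c i j))).integrable_sq
  simp only [normE_sq, Pi.add_apply]
  rw [integral_finsetSum _ fun i _ => integrable_finsetSum _ fun j _ => hint i j]
  simp_rw [integral_finsetSum _ fun j _ => hint _ j, toR, h.integral_add_sq,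
    Finset.sum_add_distrib]

end IsArrivalLaw

variable {q : Fin n → Fin n → ℕ}

lemma integral_switchKernel (f : (Fin n → Fin n → ℕ) → ℝ) :
    ∫ y, f y ∂switchKernel n α sched q = ∫ a, f (nextQ n q a (sched q)) ∂α :=
  integral_map (measurable_of_countable _).aemeasurable
    (measurable_of_countable _).aestronglyMeasurable

lemma ae_switchKernel_iff {p : (Fin n → Fin n → ℕ) → Prop} :
    (∀ᵐ y ∂switchKernel n α sched q, p y) ↔ ∀ᵐ a ∂α, p (nextQ n q a (sched q)) :=
  ae_map_iff (measurable_of_countable _).aemeasurable (Set.to_countable _).measurableSet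

lemma normE_toR_nextQ_sub_le {a s : Fin n → Fin n → ℕ} {amax : ℕ} (hamax : 1 ≤ amax)
    (ha : ∀ i j, a i j ≤ amax) (hs : ∀ i j, s i j ≤ 1) :
    normE n (toR n (nextQ n q a s) - toR n q) ≤ n * amax := by
  have hle (i j : Fin n) : |(toR n (nextQ n q a s) - toR n q) i j| ≤ |(amax : ℝ)| := by
    refine (abs_toR_nextQ_sub_le q a s (Nat.cast_nonneg _)).trans ?_
    have h₁ : (a i j : ℝ) ≤ amax := mod_cast ha i j
    have h₂ : (s i j : ℝ) ≤ 1 := mod_cast hs i j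
    have h₃ : (1 : ℝ) ≤ amax := mod_cast hamax
    have h₄ : (0 : ℝ) ≤ a i j := Nat.cast_nonneg _
    have h₅ : (0 : ℝ) ≤ s i j := Nat.cast_nonneg _
    simp only [Pi.sub_apply, Pi.add_apply, toR]
    grind
  refine (normE_le_normE (y := fun _ _ => (amax : ℝ)) hle).trans_eq ?_
  rw [normE, Real.sqrt_eq_iff_mul_self_eq (by positivity) (by positivity)]
  simp only [Finset.sum_const, Finset.card_univ, Fintype.card_fin, nsmul_eq_mul]
  ring

variable {proj : (Fin n → Fin n → ℝ) → (Fin n → Fin n → ℝ)}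

lemma normE_toR_nextQ_sub_proj_le (hproj : IsConeProj n proj) (a s : Fin n → Fin n → ℕ) :
    normE n (toR n (nextQ n q a s) - proj (toR n (nextQ n q a s))) ≤
      normE n (toR n a + (toR n q - proj (toR n q) - toR n s)) := by
  have hmem := (hproj (toR n q)).1
  refine ((hproj _).2 _ hmem).trans (normE_le_normE fun i j => ?_)
  refine (abs_toR_nextQ_sub_le q a s (nonneg_of_mem_coneK hmem i j)).trans_eq ?_
  congr 1
  simp only [Pi.sub_apply, Pi.add_apply]
  ring

lemma normE_sub_schedule_sq_le (hlam : ∀ i j, 0 ≤ lam i j) {s : Fin n → Fin n → ℕ}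
    (hs : IsPerm n s) : normE n (lam - toR n s) ^ 2 ≤ (∑ i, ∑ j, lam i j ^ 2) + n := by
  obtain ⟨hle, hrow, -⟩ := hs
  calc normE n (lam - toR n s) ^ 2 ≤ ∑ i, ∑ j, (lam i j ^ 2 + s i j) := by
        rw [normE_sq]
        gcongr with i _ j _
        have := hle i j
        have := hlam i j
        simp only [Pi.sub_apply, toR]
        interval_cases s i j
        · simp
        · push_cast
          nlinarith
    _ = (∑ i, ∑ j, lam i j ^ 2) + n := by
        simp only [Finset.sum_add_distrib, ← Nat.cast_sum, hrow]
        simp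

end Queue

section StateSpaceCollapse

variable {n : ℕ} {α : Measure (Fin n → Fin n → ℕ)} {ν lam sig : Fin n → Fin n → ℝ} {amax : ℕ}
  {sched : (Fin n → Fin n → ℕ) → (Fin n → Fin n → ℕ)}
  {proj : (Fin n → Fin n → ℝ) → (Fin n → Fin n → ℝ)} {v : ℝ}

lemma ae_abs_normE_sub_proj_sub_le (hα : IsArrivalLaw n α lam sig amax) (hamax : 1 ≤ amax)
    (hsched : IsMaxWeight n sched) (hproj : IsConeProj n proj) (q : Fin n → Fin n → ℕ) :
    ∀ᵐ y ∂switchKernel n α sched q,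
      |normE n (toR n y - proj (toR n y)) - normE n (toR n q - proj (toR n q))| ≤ n * amax := by
  rw [ae_switchKernel_iff]
  filter_upwards [hα.le_amax] with a ha
  exact (abs_normE_sub_proj_sub_le hproj _ _).trans
    (normE_toR_nextQ_sub_le hamax ha (hsched q).1.1)

variable [IsProbabilityMeasure α]

lemma integral_normE_add_sub_schedule_sq_le (hα : IsArrivalLaw n α lam sig amax) (hν : memF n ν)
    (hv : 0 ≤ v) (hvν : ∀ i j, v ≤ ν i j) (hlam : normE n (lam - ν) ≤ v / 2)
    (hsched : IsMaxWeight n sched) (hproj : IsConeProj n proj) (q : Fin n → Fin n → ℕ) :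
    ∫ a, normE n (toR n a + (toR n q - proj (toR n q) - toR n (sched q))) ^ 2 ∂α ≤
      normE n (toR n q - proj (toR n q)) ^ 2 - v * normE n (toR n q - proj (toR n q)) +
        ((∑ i, ∑ j, lam i j ^ 2) + (∑ i, ∑ j, sig i j ^ 2) + n) := by
  have hinner := inner_sub_proj_mean_sub_schedule_le hproj hsched hν hv hvν hlam q
  have hsq := normE_sub_schedule_sq_le hα.mean_nonneg (hsched q).1
  rw [hα.integral_normE_add_sq]
  set p := toR n q - proj (toR n q)
  have hexpand : normE n (lam + (p - toR n (sched q))) ^ 2 = normE n p ^ 2 +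
      2 * ⟪vec n p, vec n (lam - toR n (sched q))⟫ + normE n (lam - toR n (sched q)) ^ 2 := by
    rw [add_sub_left_comm]
    simp only [← norm_vec, map_add, norm_add_sq_real]
  linarith

lemma integral_normE_sub_proj_le (hα : IsArrivalLaw n α lam sig amax) (hν : memF n ν)
    (hv : 0 < v) (hvν : ∀ i j, v ≤ ν i j) (hlam : normE n (lam - ν) ≤ v / 2)
    (hsched : IsMaxWeight n sched) (hproj : IsConeProj n proj) (q : Fin n → Fin n → ℕ)
    (hq : 2 * ((∑ i, ∑ j, lam i j ^ 2) + (∑ i, ∑ j, sig i j ^ 2) + n) / v <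
      normE n (toR n q - proj (toR n q))) :
    ∫ y, normE n (toR n y - proj (toR n y)) ∂switchKernel n α sched q ≤
      normE n (toR n q - proj (toR n q)) - v / 4 := by
  have hsecond := integral_normE_add_sub_schedule_sq_le hα hν hv.le hvν hlam hsched hproj q
  set L := (∑ i, ∑ j, lam i j ^ 2) + (∑ i, ∑ j, sig i j ^ 2) + n
  set b := normE n (toR n q - proj (toR n q))
  have hL : 0 ≤ L := by positivity
  have hb : 0 < b := lt_of_le_of_lt (by positivity) hq
  rw [integral_switchKernel]
  refine (integral_le_of_sq_le (fun a => normE_nonneg _) (fun a => pow_le_pow_left₀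
    (normE_nonneg _) (normE_toR_nextQ_sub_proj_le hproj a (sched q)) 2)
    (hα.integrable_normE_add_sq _) hb).trans ?_
  rw [div_le_iff₀ (by positivity)]
  rw [div_lt_iff₀ hv] at hq
  nlinarith

lemma hasNegativeDrift_switchKernel (hα : IsArrivalLaw n α lam sig amax) (hamax : 1 ≤ amax)
    (hν : memF n ν) (hv : 0 < v) (hvν : ∀ i j, v ≤ ν i j) (hlam : normE n (lam - ν) ≤ v / 2)
    (hsched : IsMaxWeight n sched) (hproj : IsConeProj n proj) :
    HasNegativeDrift (switchKernel n α sched) (fun q => normE n (toR n q - proj (toR n q)))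
      (n * amax) (v / 4) (2 * ((∑ i, ∑ j, lam i j ^ 2) + (∑ i, ∑ j, sig i j ^ 2) + n) / v) where
  abs_sub_le := ae_abs_normE_sub_proj_sub_le hα hamax hsched hproj
  integral_le := integral_normE_sub_proj_le hα hν hv hvν hlam hsched hproj

lemma memF.le_one_of_forall_le (hν : memF n ν) (hn : 1 ≤ n) (hvν : ∀ i j, v ≤ ν i j) : v ≤ 1 := by
  have i : Fin n := ⟨0, hn⟩
  exact (hvν i i).trans (hν.2.1 i ▸
    Finset.single_le_sum (fun j _ => hν.1 i j) (Finset.mem_univ i))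

end StateSpaceCollapse

section MassMeasure

variable {X : Type*} [MeasurableSpace X]

/-- The discrete measure giving mass `p x` to each point `x`. It turns the mass functions of the
model into measures. -/
noncomputable def massMeasure (p : X → ℝ≥0∞) : Measure X :=
  Measure.sum fun x => p x • Measure.dirac x

lemma isProbabilityMeasure_massMeasure {p : X → ℝ≥0∞} (hp : ∑' x, p x = 1) :
    IsProbabilityMeasure (massMeasure p) :=
  ⟨by simpa [massMeasure] using hp⟩

variable [MeasurableSingletonClass X]

lemma massMeasure_singleton (p : X → ℝ≥0∞) (x : X) : massMeasure p {x} = p x :=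
  Measure.sum_smul_dirac_singleton

lemma lintegral_massMeasure (p f : X → ℝ≥0∞) : ∫⁻ x, f x ∂massMeasure p = ∑' x, p x * f x := by
  simp [massMeasure, lintegral_sum_measure]

end MassMeasure

section DiscreteModel

variable {n : ℕ} {A : Fin n → Fin n → ℕ → ℝ≥0∞} {lam sig : Fin n → Fin n → ℝ} {amax : ℕ}
  {sched : (Fin n → Fin n → ℕ) → (Fin n → Fin n → ℕ)} {pd : (Fin n → Fin n → ℕ) → ℝ≥0∞}

lemma switchKernel_massMeasure_singleton (q q' : Fin n → Fin n → ℕ) :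
    switchKernel n (massMeasure (jointA n A)) sched q {q'} = kernelMW n A sched q q' := by
  rw [switchKernel_apply, ← lintegral_indicator_one (measurableSet_singleton q'),
    lintegral_map (measurable_of_countable _) (measurable_of_countable _), lintegral_massMeasure]
  simp [kernelMW, Set.indicator]

lemma IsInvariant.invariant_switchKernel (hpd : IsInvariant n (kernelMW n A sched) pd) :
    (switchKernel n (massMeasure (jointA n A)) sched).Invariant (massMeasure pd) := by
  refine Measure.ext_of_singleton fun q' => ?_
  rw [Measure.bind_apply (measurableSet_singleton q') (Kernel.aemeasurable _),
    lintegral_massMeasure, massMeasure_singleton, ← hpd.2 q']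
  simp only [switchKernel_massMeasure_singleton]

namespace ArrivalDist

lemma isProbabilityMeasure (hA : ArrivalDist n A lam sig amax) (i j : Fin n) :
    IsProbabilityMeasure (massMeasure (A i j)) :=
  isProbabilityMeasure_massMeasure (hA.1 i j)

lemma pi_massMeasure (hA : ArrivalDist n A lam sig amax) :
    (Measure.pi fun i => Measure.pi fun j => massMeasure (A i j)) = massMeasure (jointA n A) := by
  have := hA.isProbabilityMeasure
  refine Measure.ext_of_singleton fun a => ?_
  simp only [Measure.pi_singleton, massMeasure_singleton, jointA]

lemma measurePreserving_apply (hA : ArrivalDist n A lam sig amax) (i j : Fin n) :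
    MeasurePreserving (fun a : Fin n → Fin n → ℕ => a i j) (massMeasure (jointA n A))
      (massMeasure (A i j)) := by
  have := hA.isProbabilityMeasure
  rw [← hA.pi_massMeasure]
  exact (measurePreserving_eval (fun j => massMeasure (A i j)) j).comp
    (measurePreserving_eval (fun i => Measure.pi fun j => massMeasure (A i j)) i)

lemma ae_le_amax (hA : ArrivalDist n A lam sig amax) (i j : Fin n) :
    ∀ᵐ k ∂massMeasure (A i j), k ≤ amax :=
  ae_iff_of_countable.2 fun k hk => hA.2.1 i j k (massMeasure_singleton (A i j) k ▸ hk)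

lemma integral_massMeasure (hA : ArrivalDist n A lam sig amax) (i j : Fin n) (f : ℕ → ℝ) :
    ∫ k, f k ∂massMeasure (A i j) = ∑' k, (A i j k).toReal * f k := by
  have := hA.isProbabilityMeasure i j
  have hint : Integrable f (massMeasure (A i j)) := by
    refine .of_bound (measurable_of_countable f).aestronglyMeasurable
      (∑ k ∈ Finset.range (amax + 1), |f k|) ?_
    filter_upwards [hA.ae_le_amax i j] with k hk
    exact Finset.single_le_sum (f := fun k => |f k|) (fun k _ => abs_nonneg _)
      (Finset.mem_range_succ_iff.2 hk)
  rw [integral_countable hint]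
  simp only [measureReal_def, massMeasure_singleton, smul_eq_mul]

lemma isProbabilityMeasure_jointA (hA : ArrivalDist n A lam sig amax) :
    IsProbabilityMeasure (massMeasure (jointA n A)) := by
  have := hA.isProbabilityMeasure
  rw [← hA.pi_massMeasure]
  infer_instance

lemma isArrivalLaw (hA : ArrivalDist n A lam sig amax) :
    IsArrivalLaw n (massMeasure (jointA n A)) lam sig amax where
  le_amax := by
    simp only [ae_all_iff]
    exact fun i j => (hA.measurePreserving_apply i j).quasiMeasurePreserving.ae (hA.ae_le_amax i j)
  mean i j := by
    rw [← hA.2.2.1 i j, ← hA.integral_massMeasure i j, ← (hA.measurePreserving_apply i j).map_eq,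
      integral_map (measurable_of_countable _).aemeasurable
        (measurable_of_countable _).aestronglyMeasurable]
  variance i j := by
    rw [(hA.measurePreserving_apply i j).variance_fun_comp (f := fun k : ℕ => (k : ℝ))
        (measurable_of_countable _).aemeasurable,
      variance_eq_integral (measurable_of_countable _).aemeasurable]
    simp only [hA.integral_massMeasure, hA.2.2.1, hA.2.2.2]

end ArrivalDist

end DiscreteModel

end SwitchModel

open MeasureTheory ProbabilityTheory in
theorem state_space_collapse_general {n : ℕ} (hn : 1 ≤ n) {ν : Fin n → Fin n → ℝ} (hν : memF n ν)
    {v : ℝ} (hv : 0 < v) (hvν : ∀ i j, v ≤ ν i j) {lam sig : Fin n → Fin n → ℝ}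
    (hlam : normE n (lam - ν) ≤ v / 2) {amax : ℕ} (hamax : 1 ≤ amax)
    {α : Measure (Fin n → Fin n → ℕ)} [IsProbabilityMeasure α]
    (hα : IsArrivalLaw n α lam sig amax)
    {sched : (Fin n → Fin n → ℕ) → (Fin n → Fin n → ℕ)} (hsched : IsMaxWeight n sched)
    {π : Measure (Fin n → Fin n → ℕ)} [IsProbabilityMeasure π]
    (hπ : (switchKernel n α sched).Invariant π)
    {proj : (Fin n → Fin n → ℝ) → (Fin n → Fin n → ℝ)} (hproj : IsConeProj n proj)
    {r : ℕ} (hr : 1 ≤ r) :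
    ∫⁻ q, ENNReal.ofReal (normE n (toR n q - proj (toR n q)) ^ r) ∂π ≤ ENNReal.ofReal
      (((2 : ℝ) ^ ((1 : ℝ) / r) *
        max (8 * ((∑ i, ∑ j, lam i j ^ 2) + (∑ i, ∑ j, sig i j ^ 2) + n) / v)
          ((√r * Real.exp 1) ^ ((1 : ℝ) / r) * 16 * (r / Real.exp 1) *
            (n * amax / v) * (n * amax + 1))) ^ r) := by
  have hdrift := hasNegativeDrift_switchKernel hα hamax hν hv hvν hlam hsched hproj
  obtain ⟨k, rfl⟩ := Nat.exists_eq_add_of_le' hr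
  refine (lintegral_pow_succ_le_of_hasNegativeDrift hπ hdrift (measurable_of_countable _)
    (fun _ => normE_nonneg _) (by positivity) (by positivity) (by positivity) k).trans ?_
  exact ENNReal.ofReal_le_ofReal
    (moment_const_le hr (by positivity) hv (hν.le_one_of_forall_le hn hvν) (by positivity))

/-- Proposition 4.2, fixed-ε version: state-space collapse under MaxWeight.
All steady-state moments of `‖q̄_⊥‖` are bounded by `(M_r)^r`. -/
theorem state_space_collapse
    (n : ℕ) (hn : 1 ≤ n)
    (ν : Fin n → Fin n → ℝ) (hν : memF n ν)
    (νmin : ℝ) (hνmin : IsLeast {x : ℝ | ∃ i j : Fin n, ν i j = x} νmin)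
    (hνminpos : 0 < νmin)
    (ε : ℝ) (hε0 : 0 < ε) (hε : ε ≤ νmin / (2 * normE n ν))
    (sig : Fin n → Fin n → ℝ) (amax : ℕ) (hamax : 1 ≤ amax)
    (A : Fin n → Fin n → ℕ → ℝ≥0∞)
    (hA : ArrivalDist n A (fun i j => (1 - ε) * ν i j) sig amax)
    (sched : (Fin n → Fin n → ℕ) → (Fin n → Fin n → ℕ))
    (hsched : IsMaxWeight n sched)
    (pd : (Fin n → Fin n → ℕ) → ℝ≥0∞)
    (hpd : IsInvariant n (kernelMW n A sched) pd)
    (proj : (Fin n → Fin n → ℝ) → (Fin n → Fin n → ℝ))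
    (hproj : IsConeProj n proj)
    (r : ℕ) (hr : 1 ≤ r) :
    (∑' q : Fin n → Fin n → ℕ,
        pd q * ENNReal.ofReal (normE n (toR n q - proj (toR n q)) ^ r))
      ≤ ENNReal.ofReal
        (((2 : ℝ) ^ ((1 : ℝ) / r) *
          max (8 * ((∑ i, ∑ j, ((1 - ε) * ν i j) ^ 2) + (∑ i, ∑ j, (sig i j) ^ 2) + n) / νmin)
            ((Real.sqrt r * Real.exp 1) ^ ((1 : ℝ) / r) * 16 * (r / Real.exp 1) *
              (n * amax / νmin) * (n * amax + 1))) ^ r) := by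
  have := hA.isProbabilityMeasure_jointA
  have := isProbabilityMeasure_massMeasure hpd.1
  rw [← lintegral_massMeasure]
  exact state_space_collapse_general hn hν hνminpos (fun i j => hνmin.2 ⟨i, j, rfl⟩)
    (normE_one_sub_mul_sub_le hε0 hε) hamax hA.isArrivalLaw hsched hpd.invariant_switchKernel
    hproj hr
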